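/- Let r : (−∞,b̃) → ℝ be smooth and satisfy Setting RS, i.e. for every z < b̃: r(z) > 0, 0 < r'(z) ≤ 1/√2 and r(z)·r''(z) > 2·r'(z)²·(r'(z)²+1). Then 𝒦(z) = r'(z)/(r(z)√(r'(z)²+1)) tends to 0 as z → −∞. (In fact already r'(z)/r(z) → 0 as z → −∞.) -/

import Mathlib

/-! The inequality `r * r'' ≥ c * r' ^ 2` says that the quotient `r / r'` has derivative
`1 - r * r'' / r' ^ 2 ≤ 1 - c`. For `c > 1` this quotient therefore grows at least linearly as
`z → -∞`, so its inverse `r' / r` tends to `0`. Setting RS is the case `c = 2`. -/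

open Filter Set Topology

theorem tendsto_atBot_atTop_of_hasDerivAt_le_neg {f f' : ℝ → ℝ} {ε : ℝ} (hε : 0 < ε)
    (hf : ∀ᶠ z in atBot, HasDerivAt f (f' z) z) (hf' : ∀ᶠ z in atBot, f' z ≤ -ε) :
    Tendsto f atBot atTop := by
  obtain ⟨b, hb⟩ := eventually_atBot.mp (hf.and hf')
  have hderiv : ∀ x ∈ Iic b, HasDerivAt f (f' x) x := fun x hx ↦ (hb x hx).1
  have hle : ∀ x ∈ Iic b, f' x ≤ -ε := fun x hx ↦ (hb x hx).2
  have linear_bound : ∀ z ≤ b, ε * (b - z) + f b ≤ f z := by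
    intro z hz
    have mean_value := (convex_Iic b).image_sub_le_mul_sub_of_deriv_le
      (fun x hx ↦ (hderiv x hx).continuousAt.continuousWithinAt)
      (fun x hx ↦ (hderiv x (interior_subset hx)).differentiableAt.differentiableWithinAt)
      (fun x hx ↦ (hderiv x (interior_subset hx)).deriv.trans_le (hle x (interior_subset hx)))
      z hz b self_mem_Iic hz
    linarith
  have linear_tendsto : Tendsto (fun z ↦ ε * (b - z) + f b) atBot atTop :=
    tendsto_atTop_add_const_right _ _ <| Tendsto.const_mul_atTop hε <|
      tendsto_atTop_add_const_left _ _ tendsto_neg_atBot_atTop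
  exact tendsto_atTop_mono' _ ((eventually_le_atBot b).mono linear_bound) linear_tendsto

theorem hasDerivAt_div_deriv {𝕜 : Type*} [NontriviallyNormedField 𝕜] {r r' : 𝕜 → 𝕜} {r'' z : 𝕜}
    (hr : HasDerivAt r (r' z) z) (hr' : HasDerivAt r' r'' z) (hne : r' z ≠ 0) :
    HasDerivAt (fun z ↦ r z / r' z) (1 - r z * r'' / r' z ^ 2) z := by
  refine (hr.fun_div hr' hne).congr_deriv ?_
  field_simp

theorem tendsto_div_deriv_atBot_atTop {r r' r'' : ℝ → ℝ} {c : ℝ} (hc : 1 < c)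
    (hr : ∀ᶠ z in atBot, HasDerivAt r (r' z) z) (hr' : ∀ᶠ z in atBot, HasDerivAt r' (r'' z) z)
    (hne : ∀ᶠ z in atBot, r' z ≠ 0) (hconv : ∀ᶠ z in atBot, c * r' z ^ 2 ≤ r z * r'' z) :
    Tendsto (fun z ↦ r z / r' z) atBot atTop := by
  refine tendsto_atBot_atTop_of_hasDerivAt_le_neg (f' := fun z ↦ 1 - r z * r'' z / r' z ^ 2)
    (sub_pos.mpr hc) ?_ ?_
  · filter_upwards [hr, hr', hne] with z using hasDerivAt_div_deriv
  · filter_upwards [hne, hconv] with z hz hcz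
    have : c ≤ r z * r'' z / r' z ^ 2 := (le_div_iff₀ (by positivity)).mpr hcz
    linarith

theorem abs_div_mul_sqrt_le_abs_div (a b : ℝ) : |a / (b * √(a ^ 2 + 1))| ≤ |a / b| := by
  have one_le_sqrt : 1 ≤ √(a ^ 2 + 1) := Real.one_le_sqrt.mpr (by linarith [sq_nonneg a])
  rw [← div_div, abs_div, abs_of_nonneg (Real.sqrt_nonneg _)]
  exact div_le_self (abs_nonneg _) one_le_sqrt

theorem K_tendsto_zero_general {r r' r'' : ℝ → ℝ} {c : ℝ} (hc : 1 < c)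
    (hr : ∀ᶠ z in atBot, HasDerivAt r (r' z) z) (hr' : ∀ᶠ z in atBot, HasDerivAt r' (r'' z) z)
    (hne : ∀ᶠ z in atBot, r' z ≠ 0) (hconv : ∀ᶠ z in atBot, c * r' z ^ 2 ≤ r z * r'' z) :
    Tendsto (fun z ↦ r' z / r z) atBot (𝓝 0) ∧
      Tendsto (fun z ↦ r' z / (r z * √(r' z ^ 2 + 1))) atBot (𝓝 0) := by
  have ratio_tendsto : Tendsto (fun z ↦ r' z / r z) atBot (𝓝 0) := by
    simpa only [Function.comp_def, inv_div] using
      tendsto_inv_atTop_zero.comp (tendsto_div_deriv_atBot_atTop hc hr hr' hne hconv)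
  exact ⟨ratio_tendsto, squeeze_zero_norm (fun z ↦ abs_div_mul_sqrt_le_abs_div (r' z) (r z))
    (tendsto_zero_iff_abs_tendsto_zero _ |>.mp ratio_tendsto)⟩

/-- Under Setting RS on `(−∞, b̃)`, the parallel-circle curvature
`𝒦(z) = r'(z)/(r(z)√(r'(z)²+1))` tends to `0` as `z → −∞`; in fact already
`r'(z)/r(z) → 0` as `z → −∞`. -/
theorem K_tendsto_zero (r : ℝ → ℝ) (btilde : ℝ)
    (hr : ContDiffOn ℝ (⊤ : ℕ∞) r (Set.Iio btilde))
    (hRS : ∀ z < btilde, 0 < r z ∧ (0 < deriv r z ∧ deriv r z ≤ 1 / Real.sqrt 2) ∧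
      r z * deriv (deriv r) z > 2 * (deriv r z) ^ 2 * ((deriv r z) ^ 2 + 1)) :
    Filter.Tendsto (fun z => deriv r z / r z) Filter.atBot (nhds 0) ∧
    Filter.Tendsto (fun z => deriv r z / (r z * Real.sqrt ((deriv r z) ^ 2 + 1)))
      Filter.atBot (nhds 0) := by
  have hr' : ContDiffOn ℝ 1 (deriv r) (Iio btilde) :=
    hr.deriv_of_isOpen isOpen_Iio (by norm_cast)
  have hlt := eventually_lt_atBot btilde
  refine K_tendsto_zero_general one_lt_two
    (hlt.mono fun z hz ↦ (hr.differentiableOn (by simp)).hasDerivAt (Iio_mem_nhds hz))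
    (hlt.mono fun z hz ↦ (hr'.differentiableOn one_ne_zero).hasDerivAt (Iio_mem_nhds hz))
    (hlt.mono fun z hz ↦ (hRS z hz).2.1.1.ne') (hlt.mono fun z hz ↦ ?_)
  calc 2 * deriv r z ^ 2 ≤ 2 * deriv r z ^ 2 * (deriv r z ^ 2 + 1) :=
        le_mul_of_one_le_right (by positivity) (by linarith [sq_nonneg (deriv r z)])
    _ ≤ r z * deriv (deriv r) z := (hRS z hz).2.2.le
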